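/- Let e = (1,1,...) ∈ ℓ∞ and let f be a positive singular Riesz homomorphism on ℓ∞ with f(e) = 1, and set B = f ⊗ e. Then M_{I,I} ∧ M_{I,B} ≠ 0 in L^r(L^r(ℓ∞)), even though I ∧ B = 0 in L^r(ℓ∞). In particular, (M_{I,I} ∧ M_{I,B})(f ⊗ e)(e) = e, so the map C ↦ M_{I,C} from L^r(ℓ∞) to L^r(L^r(ℓ∞)) is not a Riesz homomorphism. -/

import Mathlib

/-!
Every claim is tested on positive operators and evaluated coordinatewise.

* `I ∧ B = 0`: singularity forces `f` to vanish on the indicator `1ₙ` of a point, since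
  `f(1ₙ) δₙ` lies below both `f` and the order continuous functional `δₙ` (`map_indic`). If
  `V ≤ I` and `V ≤ B`, split `x ≥ 0` as `xₙ 1ₙ + (x - xₙ 1ₙ)`: at the coordinate `n`, `B` kills
  the first summand and `I` kills the second, so `V x n ≤ 0`.
* `(M_{I,I} ∧ M_{I,B})(f ⊗ e)(e) = e`: the upper bound is `M_{I,I}(f ⊗ e)(e) = e`. For the lower
  bound, an explicit minorant `Ξ` is constructed. Let `J` be the set of `u` with `0 ≤ u ≤ e` and
  `f u = 1`; it is directed downwards because `f` is a Riesz homomorphism. For `T ≥ 0` the net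
  `(T u)_{u ∈ J}` decreases coordinatewise to some `c(T) ≥ 0`, and `T ↦ c(T)` is linear. Put
  `Ξ T = f ⊗ c(T)`. Then `Ξ T ≤ f ⊗ T e = T ∘ B`, and `Ξ T ≤ T` because for `f x = s > 0` the
  element `u = (x / s) ⊓ e` is in `J` and `s u ≤ x`. Finally `c(f ⊗ e) = e`, since `f = 1` on `J`.
  As `Ξ` has to be defined on all linear operators, `c` is first defined where the
  coordinatewise limits exist and form a bounded sequence, and then extended linearly
  (`exists_limit`).
-/

open Set Filter

namespace TwoSided

section Defs

variable {E F : Type*}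
  [AddCommGroup E] [Lattice E] [Module ℝ E]
  [AddCommGroup F] [Lattice F] [Module ℝ F]

/-- A linear operator between ordered vector spaces is positive if it maps the
positive cone into the positive cone. -/
def Positive (T : E →ₗ[ℝ] F) : Prop := ∀ x : E, 0 ≤ x → 0 ≤ T x

/-- A regular operator is a difference of two positive operators. -/
def IsRegular (T : E →ₗ[ℝ] F) : Prop :=
  ∃ P Q : E →ₗ[ℝ] F, Positive P ∧ Positive Q ∧ T = P - Q

/-- `U` is the supremum of `S` and `T` in the operator order. -/
def IsOpSup (S T U : E →ₗ[ℝ] F) : Prop :=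
  Positive (U - S) ∧ Positive (U - T) ∧
    ∀ V : E →ₗ[ℝ] F, Positive (V - S) → Positive (V - T) → Positive (V - U)

/-- `U` is the infimum of `S` and `T` in the operator order. -/
def IsOpInf (S T U : E →ₗ[ℝ] F) : Prop :=
  Positive (S - U) ∧ Positive (T - U) ∧
    ∀ V : E →ₗ[ℝ] F, Positive (S - V) → Positive (T - V) → Positive (U - V)

/-- `U` is the least upper bound of the set `s` of operators in the operator order. -/
def IsOpLUB (s : Set (E →ₗ[ℝ] F)) (U : E →ₗ[ℝ] F) : Prop :=
  (∀ C ∈ s, Positive (U - C)) ∧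
    ∀ V : E →ₗ[ℝ] F, (∀ C ∈ s, Positive (V - C)) → Positive (V - U)

/-- `M` is the modulus `|T| = T ⊔ (-T)` of the operator `T`. -/
def IsModulus (T M : E →ₗ[ℝ] F) : Prop := IsOpSup T (-T) M

/-- An operator is order continuous if it maps nets decreasing to `0`
to nets order converging to `0`. -/
def OrdContinuous (T : E →ₗ[ℝ] F) : Prop :=
  ∀ (ι : Type) [SemilatticeSup ι] [Nonempty ι] (a : ι → E),
    Antitone a → IsGLB (Set.range a) 0 →
      ∃ b : ι → F, Antitone b ∧ IsGLB (Set.range b) 0 ∧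
        ∀ i, T (a i) ≤ b i ∧ -(T (a i)) ≤ b i

/-- A lattice is Dedekind complete if every nonempty set bounded above has a
least upper bound. -/
def DedekindComplete (G : Type*) [Preorder G] : Prop :=
  ∀ s : Set G, s.Nonempty → BddAbove s → ∃ a, IsLUB s a

end Defs

section Two

variable {W X Y Z : Type*}
  [AddCommGroup W] [Lattice W] [Module ℝ W]
  [AddCommGroup X] [Lattice X] [Module ℝ X]
  [AddCommGroup Y] [Lattice Y] [Module ℝ Y]
  [AddCommGroup Z] [Lattice Z] [Module ℝ Z]

/-- The two-sided multiplication operator `T ↦ A ∘ T ∘ B`. -/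
def MAB (A : Y →ₗ[ℝ] Z) (B : W →ₗ[ℝ] X) :
    (X →ₗ[ℝ] Y) →ₗ[ℝ] (W →ₗ[ℝ] Z) where
  toFun T := A ∘ₗ T ∘ₗ B
  map_add' := by intro S T; ext w; simp
  map_smul' := by intro c T; ext w; simp

/-- Positivity for operators between spaces of operators, with respect to the
operator order. -/
def Positive2 (Φ : (X →ₗ[ℝ] Y) →ₗ[ℝ] (W →ₗ[ℝ] Z)) : Prop :=
  ∀ T : X →ₗ[ℝ] Y, Positive T → Positive (Φ T)

def IsRegular2 (Φ : (X →ₗ[ℝ] Y) →ₗ[ℝ] (W →ₗ[ℝ] Z)) : Prop :=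
  ∃ Φ₁ Φ₂, Positive2 (W := W) (X := X) (Y := Y) (Z := Z) Φ₁ ∧ Positive2 Φ₂ ∧ Φ = Φ₁ - Φ₂

def IsOpSup2 (Φ Ψ Θ : (X →ₗ[ℝ] Y) →ₗ[ℝ] (W →ₗ[ℝ] Z)) : Prop :=
  Positive2 (Θ - Φ) ∧ Positive2 (Θ - Ψ) ∧
    ∀ Ξ : (X →ₗ[ℝ] Y) →ₗ[ℝ] (W →ₗ[ℝ] Z),
      Positive2 (Ξ - Φ) → Positive2 (Ξ - Ψ) → Positive2 (Ξ - Θ)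

def IsOpInf2 (Φ Ψ Θ : (X →ₗ[ℝ] Y) →ₗ[ℝ] (W →ₗ[ℝ] Z)) : Prop :=
  Positive2 (Φ - Θ) ∧ Positive2 (Ψ - Θ) ∧
    ∀ Ξ : (X →ₗ[ℝ] Y) →ₗ[ℝ] (W →ₗ[ℝ] Z),
      Positive2 (Φ - Ξ) → Positive2 (Ψ - Ξ) → Positive2 (Θ - Ξ)

def IsModulus2 (Φ M : (X →ₗ[ℝ] Y) →ₗ[ℝ] (W →ₗ[ℝ] Z)) : Prop := IsOpSup2 Φ (-Φ) M

end Two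

end TwoSided


namespace TwoSided

/-- The Banach lattice `ℓ∞` of bounded real sequences. -/
abbrev Linf : Type := BoundedContinuousFunction ℕ ℝ

/-- The strong unit `e = (1,1,…)` of `ℓ∞`. -/
noncomputable def unitE : Linf := 1

/-- A functional is a Riesz homomorphism if it preserves finite suprema. -/
def RieszHomFun {E : Type*} [AddCommGroup E] [Lattice E] [Module ℝ E]
    (f : E →ₗ[ℝ] ℝ) : Prop :=
  ∀ x y : E, f (x ⊔ y) = max (f x) (f y)

/-- A functional is σ-order continuous if it maps sequences decreasing to `0`
to null sequences. -/
def SigmaOrderContinuous {E : Type*} [AddCommGroup E] [Lattice E] [Module ℝ E]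
    (g : E →ₗ[ℝ] ℝ) : Prop :=
  ∀ a : ℕ → E, Antitone a → IsGLB (Set.range a) 0 →
    Filter.Tendsto (fun n => g (a n)) Filter.atTop (nhds 0)

/-- A positive functional is singular if it is disjoint from every positive
σ-order continuous functional. -/
def IsSingular {E : Type*} [AddCommGroup E] [Lattice E] [Module ℝ E]
    (f : E →ₗ[ℝ] ℝ) : Prop :=
  ∀ g : E →ₗ[ℝ] ℝ, Positive g → SigmaOrderContinuous g → IsOpInf f g 0

end TwoSided

namespace TwoSided

/-- The indicator of the point `n`, as an element of `ℓ∞`. -/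
noncomputable def indic (n : ℕ) : Linf :=
  BoundedContinuousFunction.ofNormedAddCommGroupDiscrete (fun k => if k = n then 1 else 0) 1
    (by intro k; split_ifs <;> simp)

lemma indic_apply (n k : ℕ) : indic n k = if k = n then 1 else 0 := rfl

lemma le_iff (x y : Linf) : x ≤ y ↔ ∀ n, x n ≤ y n := Iff.rfl

lemma unitE_apply (n : ℕ) : unitE n = 1 := rfl

/-- The coordinate functional `δₙ`. -/
noncomputable def coord (n : ℕ) : Linf →ₗ[ℝ] ℝ where
  toFun x := x n
  map_add' _ _ := rfl
  map_smul' _ _ := rfl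

lemma coord_sigma (n : ℕ) : SigmaOrderContinuous (coord n) := by
  intro a ha hglb
  have h0 : ∀ k m, 0 ≤ a k m := fun k m => hglb.1 (Set.mem_range_self k) m
  have hanti : Antitone fun k => coord n (a k) := fun i j hij => ha hij n
  have hbdd : BddBelow (Set.range fun k => coord n (a k)) :=
    ⟨0, by rintro _ ⟨k, rfl⟩; exact h0 k n⟩
  have ht := tendsto_atTop_ciInf hanti hbdd
  set L := ⨅ k, coord n (a k) with hL
  have hL0 : 0 ≤ L := le_ciInf fun k => h0 k n
  -- `L • 1ₙ` is a lower bound of the sequence, hence nonpositive.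
  have hlow : L • indic n ≤ 0 := by
    refine hglb.2 ?_
    rintro _ ⟨k, rfl⟩ m
    change L * indic n m ≤ a k m
    rw [indic_apply]
    split_ifs with h
    · subst h
      rw [mul_one]
      exact ciInf_le hbdd k
    · simpa using h0 k m
  have h1 : L * indic n n ≤ 0 := hlow n
  rw [indic_apply, if_pos rfl, mul_one] at h1
  rwa [le_antisymm h1 hL0] at ht

lemma Positive.mono' {E F : Type*} [AddCommGroup E] [Lattice E] [Module ℝ E]
    [IsOrderedAddMonoid E] [AddCommGroup F] [Lattice F] [Module ℝ F] [IsOrderedAddMonoid F]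
    {T : E →ₗ[ℝ] F} (hT : Positive T) {x y : E} (h : x ≤ y) : T x ≤ T y := by
  have := hT (y - x) (sub_nonneg.2 h)
  rwa [map_sub, sub_nonneg] at this

lemma map_indic {f : Linf →ₗ[ℝ] ℝ} (hfpos : Positive f) (hfsing : IsSingular f)
    (hfe : f unitE = 1) (n : ℕ) : f (indic n) = 0 := by
  have h0 : 0 ≤ f (indic n) := hfpos _ fun k => by
    change 0 ≤ indic n k
    rw [indic_apply]; split_ifs <;> simp
  have h1 : f (indic n) ≤ 1 := by
    rw [← hfe]
    refine hfpos.mono' fun k => ?_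
    change indic n k ≤ 1
    rw [indic_apply]; split_ifs <;> simp
  have hs := (hfsing (coord n) (fun x hx => hx n) (coord_sigma n)).2.2 (f (indic n) • coord n)
    (by
      intro x hx
      have hle : x n • indic n ≤ x := fun k => by
        change x n * indic n k ≤ x k
        rw [indic_apply]
        split_ifs with h
        · simp [h]
        · simpa using hx k
      have := hfpos.mono' hle
      rw [map_smul, smul_eq_mul] at this
      change 0 ≤ f x - f (indic n) * x n
      linarith)
    (by
      intro x hx
      have hxn : 0 ≤ x n := hx n
      change 0 ≤ x n - f (indic n) * x n
      nlinarith)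
  have h2 : 0 ≤ 0 - f (indic n) * 1 := hs unitE fun k => zero_le_one
  linarith

lemma inf_id_smulRight {f : Linf →ₗ[ℝ] ℝ} (hfpos : Positive f) (hfsing : IsSingular f)
    (hfe : f unitE = 1) :
    IsOpInf (LinearMap.id : Linf →ₗ[ℝ] Linf) (f.smulRight unitE) 0 := by
  refine ⟨fun x hx => by simpa using hx, fun x hx n => ?_, fun V hV1 hV2 x hx n => ?_⟩
  · change 0 ≤ f x * 1 - 0
    have := hfpos x hx
    linarith
  · have hxn : 0 ≤ x n := hx n
    have ha : 0 ≤ x n • indic n := fun k => by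
      change 0 ≤ x n * indic n k
      rw [indic_apply]; split_ifs <;> simp [hxn]
    have hb : 0 ≤ x - x n • indic n := fun k => by
      change 0 ≤ x k - x n * indic n k
      rw [indic_apply]
      split_ifs with h
      · simp [h]
      · simpa using hx k
    have h1 : 0 ≤ f (x n • indic n) * 1 - V (x n • indic n) n := hV2 _ ha n
    have h2 : 0 ≤ (x n - x n * indic n n) - V (x - x n • indic n) n := hV1 _ hb n
    rw [map_smul, map_indic hfpos hfsing hfe] at h1
    rw [indic_apply, if_pos rfl, map_sub] at h2
    change 0 ≤ (x n - x n * 1) - (V x n - V (x n • indic n) n) at h2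
    change 0 ≤ 0 - V x n
    simp only [smul_zero, zero_mul] at h1
    linarith

/-- The elements `u` of the order interval `[0, e]` with `f u = 1`. -/
def peak (f : Linf →ₗ[ℝ] ℝ) : Set Linf := {u | 0 ≤ u ∧ u ≤ unitE ∧ f u = 1}

lemma RieszHomFun.map_inf {f : Linf →ₗ[ℝ] ℝ} (hf : RieszHomFun f) (x y : Linf) :
    f (x ⊓ y) = min (f x) (f y) := by
  have h := congrArg f (inf_add_sup x y)
  rw [map_add, map_add, hf] at h
  have := min_add_max (f x) (f y)
  linarith

lemma peak_codirected {f : Linf →ₗ[ℝ] ℝ} (hf : RieszHomFun f) :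
    IsCodirectedOrder (peak f) := by
  refine ⟨fun u v => ⟨⟨u.1 ⊓ v.1, le_inf u.2.1 v.2.1, inf_le_left.trans u.2.2.1, ?_⟩,
    (inf_le_left : u.1 ⊓ v.1 ≤ u.1), (inf_le_right : u.1 ⊓ v.1 ≤ v.1)⟩⟩
  rw [hf.map_inf, u.2.2.2, v.2.2.2, min_self]

/-- `LinearMap.exists_extend` for operator spaces, stated for an abstract `E`, where the algebraic
instances on `E →ₗ[ℝ] E` unify directly. -/
lemma exists_extend_operators {E : Type*} [AddCommGroup E] [Module ℝ E]
    {R : Submodule ℝ (E →ₗ[ℝ] E)} (G : R →ₗ[ℝ] E) :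
    ∃ c : (E →ₗ[ℝ] E) →ₗ[ℝ] E, c ∘ₗ R.subtype = G :=
  LinearMap.exists_extend G

/-- There is a linear map `c` on all operators whose value at `T` is the coordinatewise limit of
`T u` as `u` decreases in `peak f`, whenever these limits exist and form an element of `ℓ∞`.
Elsewhere `c` is an arbitrary linear extension. -/
lemma exists_limit {f : Linf →ₗ[ℝ] ℝ} (hf : RieszHomFun f)
    (hfe : f unitE = 1) :
    ∃ c : (Linf →ₗ[ℝ] Linf) →ₗ[ℝ] Linf, ∀ (T : Linf →ₗ[ℝ] Linf) (d : Linf),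
      (∀ n, Tendsto (fun u : peak f => T u n) atBot (nhds (d n))) → c T = d := by
  have := peak_codirected hf
  have : Nonempty (peak f) := ⟨⟨unitE, fun k => zero_le_one, le_rfl, hfe⟩⟩
  let R : Submodule ℝ (Linf →ₗ[ℝ] Linf) :=
    { carrier := {T | ∃ d : Linf, ∀ n,
        Tendsto (fun u : peak f => T u n) atBot (nhds (d n))}
      zero_mem' := ⟨0, fun n => tendsto_const_nhds⟩
      add_mem' := by
        rintro S T ⟨c, hc⟩ ⟨d, hd⟩
        exact ⟨c + d, fun n => (hc n).add (hd n)⟩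
      smul_mem' := by
        rintro r T ⟨d, hd⟩
        exact ⟨r • d, fun n => (hd n).const_mul r⟩ }
  choose g hg using fun T : R => T.2
  have huniq : ∀ (T : R) (d : Linf),
      (∀ n, Tendsto (fun u : peak f => T.1 u n) atBot (nhds (d n))) → g T = d := by
    intro T d hd
    ext n
    exact tendsto_nhds_unique (hg T n) (hd n)
  let G : R →ₗ[ℝ] Linf :=
    { toFun := g
      map_add' := fun S T => huniq _ _ fun n => (hg S n).add (hg T n)
      map_smul' := fun r T => huniq _ _ fun n => (hg T n).const_mul r }
  obtain ⟨c, hc⟩ := exists_extend_operators G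
  refine ⟨c, fun T d hd => ?_⟩
  have hT : T ∈ R := ⟨d, hd⟩
  have h1 : c T = g ⟨T, hT⟩ := LinearMap.congr_fun hc ⟨T, hT⟩
  rw [h1]
  exact huniq _ _ hd

/-- For positive `T` the limit exists and is the coordinatewise infimum over `peak f`. -/
lemma exists_tendsto_of_positive {f : Linf →ₗ[ℝ] ℝ} (hf : RieszHomFun f)
    (hfe : f unitE = 1) {T : Linf →ₗ[ℝ] Linf} (hT : Positive T) :
    ∃ d : Linf, (∀ n, Tendsto (fun u : peak f => T u n) atBot (nhds (d n))) ∧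
      0 ≤ d ∧ ∀ u ∈ peak f, d ≤ T u := by
  have := peak_codirected hf
  let e' : peak f := ⟨unitE, fun k => zero_le_one, le_rfl, hfe⟩
  have : Nonempty (peak f) := ⟨e'⟩
  have hpos : ∀ (u : peak f) n, 0 ≤ T u n := fun u n => hT u u.2.1 n
  have hbdd : ∀ n, BddBelow (Set.range fun u : peak f => T u n) := fun n =>
    ⟨0, by rintro _ ⟨u, rfl⟩; exact hpos u n⟩
  have hmono : ∀ n, Monotone fun u : peak f => T u n := fun n u v huv => hT.mono' huv n
  have h0 : ∀ n, 0 ≤ ⨅ u : peak f, T u n := fun n => le_ciInf fun u => hpos u n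
  refine ⟨BoundedContinuousFunction.ofNormedAddCommGroupDiscrete
    (fun n => ⨅ u : peak f, T u n) ‖T unitE‖ fun n => ?_,
    fun n => tendsto_atBot_ciInf (hmono n) (hbdd n), h0, fun u hu n => ciInf_le (hbdd n) ⟨u, hu⟩⟩
  rw [Real.norm_of_nonneg (h0 n)]
  exact (ciInf_le (hbdd n) e').trans
    ((le_abs_self _).trans ((T unitE).norm_coe_le_norm n))

/-- Any infimum of `M_{I,I}` and `M_{I,B}` takes the value `e` at `(f ⊗ e)(e)`. -/
lemma inf2_apply {f : Linf →ₗ[ℝ] ℝ} (hfpos : Positive f) (hf : RieszHomFun f)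
    (hfe : f unitE = 1) {Θ : (Linf →ₗ[ℝ] Linf) →ₗ[ℝ] (Linf →ₗ[ℝ] Linf)}
    (hΘ : IsOpInf2 (MAB (LinearMap.id : Linf →ₗ[ℝ] Linf) (LinearMap.id : Linf →ₗ[ℝ] Linf))
      (MAB (LinearMap.id : Linf →ₗ[ℝ] Linf) (f.smulRight unitE)) Θ) :
    Θ (f.smulRight unitE) unitE = unitE := by
  have he : (0 : Linf) ≤ unitE := fun k => zero_le_one
  have hBpos : Positive (f.smulRight unitE) := fun x hx n =>
    mul_nonneg (hfpos x hx) zero_le_one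
  obtain ⟨c, hc⟩ := exists_limit hf hfe
  have hcpos : ∀ T : Linf →ₗ[ℝ] Linf, Positive T → 0 ≤ c T ∧ ∀ u ∈ peak f, c T ≤ T u := by
    intro T hT
    obtain ⟨d, hd, hd'⟩ := exists_tendsto_of_positive hf hfe hT
    rwa [hc T d hd]
  have hcB : c (f.smulRight unitE) = unitE := by
    refine hc _ _ fun n => ?_
    have : (fun u : peak f => (f.smulRight unitE) (u : Linf) n) = fun _ => unitE n := by
      funext u
      change f u * unitE n = unitE n
      rw [u.2.2.2, one_mul]
    rw [this]
    exact tendsto_const_nhds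
  let Ξ : (Linf →ₗ[ℝ] Linf) →ₗ[ℝ] (Linf →ₗ[ℝ] Linf) := LinearMap.smulRightₗ f ∘ₗ c
  have hΞ := hΘ.2.2 Ξ
    (by
      intro T hT x hx n
      obtain ⟨-, hle⟩ := hcpos T hT
      change 0 ≤ T x n - f x * c T n
      have hTx : 0 ≤ T x n := hT x hx n
      rcases (hfpos x hx).eq_or_lt with hs | hs
      · rw [← hs]; linarith
      · set s := f x with hsdef
        have hu : (s⁻¹ • x) ⊓ unitE ∈ peak f := by
          refine ⟨le_inf (fun k => mul_nonneg (inv_nonneg.2 hs.le) (hx k)) he, inf_le_right, ?_⟩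
          rw [hf.map_inf, map_smul, hfe, smul_eq_mul, ← hsdef, inv_mul_cancel₀ hs.ne', min_self]
        have h1 : c T n ≤ T ((s⁻¹ • x) ⊓ unitE) n := hle _ hu n
        have h2 : T ((s⁻¹ • x) ⊓ unitE) n ≤ T (s⁻¹ • x) n := hT.mono' inf_le_left n
        rw [map_smul] at h2
        change _ ≤ s⁻¹ * T x n at h2
        have h3 : s * c T n ≤ s * (s⁻¹ * T x n) :=
          mul_le_mul_of_nonneg_left (h1.trans h2) hs.le
        rw [mul_inv_cancel_left₀ hs.ne'] at h3
        linarith)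
    (by
      intro T hT x hx n
      obtain ⟨-, hle⟩ := hcpos T hT
      have h1 : c T n ≤ T unitE n := hle unitE ⟨he, le_rfl, hfe⟩ n
      change 0 ≤ T (f x • unitE) n - f x * c T n
      rw [map_smul]
      change 0 ≤ f x * T unitE n - f x * c T n
      have := mul_le_mul_of_nonneg_left h1 (hfpos x hx)
      linarith)
  ext n
  have hup : 0 ≤ f unitE * unitE n - Θ (f.smulRight unitE) unitE n :=
    hΘ.1 _ hBpos unitE he n
  have hlow : 0 ≤ Θ (f.smulRight unitE) unitE n - f unitE * c (f.smulRight unitE) n :=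
    hΞ _ hBpos unitE he n
  rw [hfe] at hup hlow
  rw [hcB] at hlow
  linarith

end TwoSided

open TwoSided in
theorem statement13 (f : Linf →ₗ[ℝ] ℝ)
    (hfpos : Positive f) (hfsing : IsSingular f) (hfhom : RieszHomFun f)
    (hfe : f unitE = 1)
    (Θ : (Linf →ₗ[ℝ] Linf) →ₗ[ℝ] (Linf →ₗ[ℝ] Linf))
    (hΘ : IsOpInf2 (MAB (LinearMap.id : Linf →ₗ[ℝ] Linf) (LinearMap.id : Linf →ₗ[ℝ] Linf))
      (MAB (LinearMap.id : Linf →ₗ[ℝ] Linf) (f.smulRight unitE)) Θ) :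
    IsOpInf (LinearMap.id : Linf →ₗ[ℝ] Linf) (f.smulRight unitE) 0 ∧
    Θ ≠ 0 ∧
    Θ (f.smulRight unitE) unitE = unitE ∧
    ¬ IsOpInf2 (MAB (LinearMap.id : Linf →ₗ[ℝ] Linf) (LinearMap.id : Linf →ₗ[ℝ] Linf))
      (MAB (LinearMap.id : Linf →ₗ[ℝ] Linf) (f.smulRight unitE)) 0 := by
  have hne : (0 : Linf) ≠ unitE := fun h => by
    have h' : (0 : ℝ) = 1 := congrArg (fun x : Linf => x 0) h
    exact zero_ne_one h'
  have key := inf2_apply hfpos hfhom hfe hΘ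
  refine ⟨inf_id_smulRight hfpos hfsing hfe, ?_, key, fun h => hne (inf2_apply hfpos hfhom hfe h)⟩
  rintro rfl
  exact hne key
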